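/- Suppose the problem is smooth and unconstrained, i.e., h_k ≡ 0 and X_k = ℝ^N for all k, each A_k is nonzero, and the cyclic BCPG (i.e., BCGD) stepsize parameters are P_k = L_k. Then for all r ≥ 0, Δ^{(r+1)} := f(x^{(r+1)}) − f* ≤ 3 · max{ L, 2 log²(2NK) · (L_max + L²/L_min) } · R_0² / (r+1). -/

import Mathlib

open Finset

/-- Squared Euclidean norm of a vector in `ℝ^n`. -/
noncomputable def sqnorm {n : ℕ} (v : Fin n → ℝ) : ℝ := ∑ i, v i ^ 2

/-- Euclidean inner product on `ℝ^n`. -/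
noncomputable def dotp {n : ℕ} (u v : Fin n → ℝ) : ℝ := ∑ i, u i * v i

/-- `λ_max(AᵀA)` for a real matrix `A`, characterized as the maximum of `‖Av‖²`
over unit vectors `v`. -/
noncomputable def lamMaxQ {M N : ℕ} (A : Matrix (Fin M) (Fin N) ℝ) : ℝ :=
  sSup {r : ℝ | ∃ v : Fin N → ℝ, sqnorm v = 1 ∧ r = sqnorm (A.mulVec v)}

/-- `λ_min(AᵀA)` for a real matrix `A`, characterized as the minimum of `‖Av‖²`
over unit vectors `v`. -/
noncomputable def lamMinQ {M N : ℕ} (A : Matrix (Fin M) (Fin N) ℝ) : ℝ :=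
  sInf {r : ℝ | ∃ v : Fin N → ℝ, sqnorm v = 1 ∧ r = sqnorm (A.mulVec v)}

/-- `λ_max(AᵀA)` for the concatenated matrix `A = [A_1 ⋯ A_K]`, acting on block
vectors. -/
noncomputable def lamMaxBlock {K M N : ℕ} (A : Fin K → Matrix (Fin M) (Fin N) ℝ) : ℝ :=
  sSup {r : ℝ | ∃ v : Fin K → Fin N → ℝ, (∑ k, sqnorm (v k)) = 1 ∧
    r = sqnorm (∑ k, (A k).mulVec (v k))}

/-- Maximum of a finite family of reals indexed by `Fin K`, `K ≥ 1`. -/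
noncomputable def maxOf {K : ℕ} (hK : 1 ≤ K) (P : Fin K → ℝ) : ℝ :=
  Finset.univ.sup' (Finset.univ_nonempty_iff.mpr ⟨⟨0, hK⟩⟩) P

/-- Minimum of a finite family of reals indexed by `Fin K`, `K ≥ 1`. -/
noncomputable def minOf {K : ℕ} (hK : 1 ≤ K) (P : Fin K → ℝ) : ℝ :=
  Finset.univ.inf' (Finset.univ_nonempty_iff.mpr ⟨⟨0, hK⟩⟩) P

/-- The residual `Σ_k A_k x_k − b`. -/
noncomputable def resid {K M N : ℕ} (A : Fin K → Matrix (Fin M) (Fin N) ℝ)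
    (b : Fin M → ℝ) (x : Fin K → Fin N → ℝ) : Fin M → ℝ :=
  (∑ k, (A k).mulVec (x k)) - b

/-- The smooth part `g(x) = (1/2)‖Σ_k A_k x_k − b‖²`. -/
noncomputable def gq {K M N : ℕ} (A : Fin K → Matrix (Fin M) (Fin N) ℝ)
    (b : Fin M → ℝ) (x : Fin K → Fin N → ℝ) : ℝ :=
  (1 / 2) * sqnorm (resid A b x)

/-- The objective `f(x) = g(x) + Σ_k h_k(x_k)`. -/
noncomputable def fq {K M N : ℕ} (A : Fin K → Matrix (Fin M) (Fin N) ℝ)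
    (b : Fin M → ℝ) (h : Fin K → (Fin N → ℝ) → ℝ) (x : Fin K → Fin N → ℝ) : ℝ :=
  gq A b x + ∑ k, h k (x k)

/-- The partial gradient `∇_k g(x) = A_kᵀ (Σ_j A_j x_j − b)`. -/
noncomputable def gradk {K M N : ℕ} (A : Fin K → Matrix (Fin M) (Fin N) ℝ)
    (b : Fin M → ℝ) (x : Fin K → Fin N → ℝ) (k : Fin K) : Fin N → ℝ :=
  ((A k).transpose).mulVec (resid A b x)

/-- The intermediate point `w_k^{(r+1)}` of the cycle: blocks `j < k` come from
`x^{(r+1)} = xp`, the remaining blocks from `x^{(r)} = x`. -/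
def wpt {K N : ℕ} (x xp : Fin K → Fin N → ℝ) (k : Fin K) : Fin K → Fin N → ℝ :=
  fun j => if j < k then xp j else x j

/-- The objective of the `k`-th BCPG prox subproblem at the point
`w_k^{(r+1)} = wpt x xp k`, evaluated at candidate block `y`. -/
noncomputable def bcpgObj {K M N : ℕ} (A : Fin K → Matrix (Fin M) (Fin N) ℝ)
    (b : Fin M → ℝ) (h : Fin K → (Fin N → ℝ) → ℝ) (P : Fin K → ℝ)
    (x xp : Fin K → Fin N → ℝ) (k : Fin K) (y : Fin N → ℝ) : ℝ :=
  dotp (gradk A b (wpt x xp k) k) (y - x k) + (P k / 2) * sqnorm (y - x k) + h k y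

/-- One cycle of cyclic BCPG: `xp = x^{(r+1)}` is obtained from `x = x^{(r)}`
by letting, for `k = 1,…,K`, the `k`-th block minimize the prox subproblem at
`w_k^{(r+1)}` over `X_k`. -/
def BCPGStep {K M N : ℕ} (A : Fin K → Matrix (Fin M) (Fin N) ℝ)
    (b : Fin M → ℝ) (h : Fin K → (Fin N → ℝ) → ℝ)
    (X : Fin K → Set (Fin N → ℝ)) (P : Fin K → ℝ)
    (x xp : Fin K → Fin N → ℝ) : Prop :=
  ∀ k : Fin K, xp k ∈ X k ∧ ∀ y ∈ X k,
    bcpgObj A b h P x xp k (xp k) ≤ bcpgObj A b h P x xp k y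

/-- One cycle of cyclic exact BCD: `xp = x^{(r+1)}` is obtained from
`x = x^{(r)}` by letting, for `k = 1,…,K`, the `k`-th block minimize
`f(x_1^{(r+1)},…,x_{k−1}^{(r+1)}, ·, x_{k+1}^{(r)},…,x_K^{(r)})` over `X_k`. -/
def BCDStep {K M N : ℕ} (A : Fin K → Matrix (Fin M) (Fin N) ℝ)
    (b : Fin M → ℝ) (h : Fin K → (Fin N → ℝ) → ℝ)
    (X : Fin K → Set (Fin N → ℝ))
    (x xp : Fin K → Fin N → ℝ) : Prop :=
  ∀ k : Fin K, xp k ∈ X k ∧ ∀ y ∈ X k,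
    fq A b h (Function.update (wpt x xp k) k (xp k)) ≤
      fq A b h (Function.update (wpt x xp k) k y)

open Matrix in
lemma sqnorm_eq {n : ℕ} (v : Fin n → ℝ) : sqnorm v = v ⬝ᵥ v := by
  simp [sqnorm, dotProduct, pow_two]

lemma sqnorm_nonneg' {n : ℕ} (v : Fin n → ℝ) : 0 ≤ sqnorm v :=
  Finset.sum_nonneg fun i _ => sq_nonneg _

lemma sqnorm_smul' {n : ℕ} (c : ℝ) (v : Fin n → ℝ) : sqnorm (c • v) = c ^ 2 * sqnorm v := by
  simp [sqnorm, mul_pow, Finset.mul_sum]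

lemma sup_bound {E : Type*} [AddCommGroup E] [Module ℝ E] (q n : E → ℝ)
    (hq : ∀ (c : ℝ) v, q (c • v) = c ^ 2 * q v) (hn : ∀ (c : ℝ) v, n (c • v) = c ^ 2 * n v)
    (hn0 : ∀ v, 0 ≤ n v) (C : ℝ) (hC : ∀ v, q v ≤ C * n v) (v : E) :
    q v ≤ sSup {r : ℝ | ∃ v : E, n v = 1 ∧ r = q v} * n v := by
  have hb : BddAbove {r : ℝ | ∃ v : E, n v = 1 ∧ r = q v} := by
    refine ⟨C, ?_⟩
    rintro r ⟨v, h1, rfl⟩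
    have := hC v
    rwa [h1, mul_one] at this
  rcases (hn0 v).eq_or_lt with h | h
  · have := hC v
    rw [← h] at this ⊢
    simpa using this
  · have hs : 0 < Real.sqrt (n v) := Real.sqrt_pos.mpr h
    have hss : Real.sqrt (n v) ^ 2 = n v := Real.sq_sqrt h.le
    have h1 : n ((Real.sqrt (n v))⁻¹ • v) = 1 := by
      rw [hn, inv_pow, hss, inv_mul_cancel₀ h.ne']
    have h2 := le_csSup hb ⟨_, h1, rfl⟩
    rw [hq, inv_pow, hss, inv_mul_le_iff₀ h] at h2
    linarith

lemma mulVec_bound {M N : ℕ} (A : Matrix (Fin M) (Fin N) ℝ) (v : Fin N → ℝ) :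
    sqnorm (A.mulVec v) ≤ (∑ i, ∑ j, A i j ^ 2) * sqnorm v := by
  unfold sqnorm
  rw [Finset.sum_mul]
  refine Finset.sum_le_sum fun i _ => ?_
  exact Finset.sum_mul_sq_le_sq_mul_sq Finset.univ (fun j => A i j) v

lemma lamQ_bound {M N : ℕ} (A : Matrix (Fin M) (Fin N) ℝ) (v : Fin N → ℝ) :
    sqnorm (A.mulVec v) ≤ lamMaxQ A * sqnorm v := by
  refine sup_bound (fun v => sqnorm (A.mulVec v)) sqnorm ?_ sqnorm_smul' sqnorm_nonneg' _
    (mulVec_bound A) v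
  intro c v
  simp only [Matrix.mulVec_smul, sqnorm_smul']

lemma lamB_bound {K M N : ℕ} (A : Fin K → Matrix (Fin M) (Fin N) ℝ) (v : Fin K → Fin N → ℝ) :
    sqnorm (∑ k, (A k).mulVec (v k)) ≤ lamMaxBlock A * ∑ k, sqnorm (v k) := by
  refine sup_bound (fun v : Fin K → Fin N → ℝ => sqnorm (∑ k, (A k).mulVec (v k)))
    (fun v => ∑ k, sqnorm (v k)) ?_ ?_ ?_ (∑ i, ∑ k, ∑ j, A k i j ^ 2) ?_ v
  · intro c v
    simp only [Pi.smul_apply, Matrix.mulVec_smul, ← Finset.smul_sum, sqnorm_smul']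
  · intro c v
    simp only [Pi.smul_apply, sqnorm_smul', Finset.mul_sum]
  · intro v
    exact Finset.sum_nonneg fun k _ => sqnorm_nonneg' _
  · intro v
    simp only [sqnorm]
    rw [Finset.sum_mul]
    refine Finset.sum_le_sum fun i _ => ?_
    have := Finset.sum_mul_sq_le_sq_mul_sq (Finset.univ : Finset (Fin K × Fin N))
      (fun p => A p.1 i p.2) (fun p => v p.1 p.2)
    simp only [Fintype.sum_prod_type] at this
    simpa [Matrix.mulVec, dotProduct, Finset.sum_apply] using this

lemma lamQ_pos {M N : ℕ} (A : Matrix (Fin M) (Fin N) ℝ) (hA : A ≠ 0) : 0 < lamMaxQ A := by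
  by_contra h
  push Not at h
  apply hA
  ext i j
  have h1 := lamQ_bound A (Pi.single j 1)
  have h2 : sqnorm (A.mulVec (Pi.single j 1)) ≤ 0 :=
    h1.trans (mul_nonpos_of_nonpos_of_nonneg h (sqnorm_nonneg' _))
  have h3 : (A.mulVec (Pi.single j 1)) i ^ 2 ≤ sqnorm (A.mulVec (Pi.single j 1)) :=
    Finset.single_le_sum (f := fun i => (A.mulVec (Pi.single j 1)) i ^ 2)
      (fun i _ => sq_nonneg _) (Finset.mem_univ i)
  have h4 : (A.mulVec (Pi.single j 1)) i = 0 := by nlinarith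
  simpa using h4

lemma lamB_pos {K M N : ℕ} (A : Fin K → Matrix (Fin M) (Fin N) ℝ) (k : Fin K) (hA : A k ≠ 0) :
    0 < lamMaxBlock A := by
  by_contra h
  push Not at h
  apply hA
  ext i j
  have h1 := lamB_bound A (Pi.single k (Pi.single j 1))
  have e : ∑ l, (A l).mulVec ((Pi.single k (Pi.single j 1) : Fin K → Fin N → ℝ) l)
      = (A k).mulVec (Pi.single j 1) := by
    rw [Finset.sum_eq_single k]
    · simp
    · intro l _ hl
      simp [Pi.single_eq_of_ne hl]
    · simp
  rw [e] at h1
  have h2 : sqnorm ((A k).mulVec (Pi.single j 1)) ≤ 0 :=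
    h1.trans (mul_nonpos_of_nonpos_of_nonneg h (Finset.sum_nonneg fun k _ => sqnorm_nonneg' _))
  have h3 : ((A k).mulVec (Pi.single j 1)) i ^ 2 ≤ sqnorm ((A k).mulVec (Pi.single j 1)) :=
    Finset.single_le_sum (f := fun i => ((A k).mulVec (Pi.single j 1)) i ^ 2)
      (fun i _ => sq_nonneg _) (Finset.mem_univ i)
  have h4 : ((A k).mulVec (Pi.single j 1)) i = 0 := by nlinarith
  simpa using h4

/-- dyadic triangular truncation -/
lemma trunc {K : ℕ} (B : Fin K → Fin K → ℝ) (α γ : Fin K → ℝ) (κ : ℝ)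
    (hκ : 0 ≤ κ) (hα : ∀ k, 0 ≤ α k) (hγ : ∀ k, 0 ≤ γ k)
    (hB : ∀ S T : Finset (Fin K), Disjoint S T →
      ∑ k ∈ S, ∑ j ∈ T, B k j ≤ κ * (∑ k ∈ S, α k + ∑ k ∈ T, γ k)) (m : ℕ) :
    ∀ (a : ℕ) (S : Finset (Fin K)), (∀ k ∈ S, a ≤ k.val ∧ k.val < a + 2 ^ m) →
      ∑ k ∈ S, ∑ j ∈ S, (if j < k then B k j else 0) ≤ m * κ * ∑ k ∈ S, (α k + γ k) := by
  induction m with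
  | zero =>
    intro a S hS
    rw [Finset.sum_eq_zero]
    · simp
    · intro k hk
      refine Finset.sum_eq_zero fun j hj => ?_
      have h1 := hS k hk
      have h2 := hS j hj
      rw [if_neg]
      rw [Fin.lt_def]
      omega
  | succ m ih =>
    intro a S hS
    set S1 := S.filter (fun k => k.val < a + 2 ^ m) with hS1
    set S2 := S.filter (fun k => ¬ k.val < a + 2 ^ m) with hS2
    have hd : Disjoint S1 S2 := Finset.disjoint_filter_filter_not _ _ _
    have hsplit : ∀ f : Fin K → ℝ, ∑ k ∈ S, f k = ∑ k ∈ S1, f k + ∑ k ∈ S2, f k := fun f =>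
      (Finset.sum_filter_add_sum_filter_not S _ f).symm
    have i1 := ih a S1 (by
      intro k hk
      rw [hS1, Finset.mem_filter] at hk
      exact ⟨(hS k hk.1).1, hk.2⟩)
    have i2 := ih (a + 2 ^ m) S2 (by
      intro k hk
      rw [hS2, Finset.mem_filter] at hk
      have := hS k hk.1
      rw [pow_succ] at this
      omega)
    have e12 : ∑ k ∈ S1, ∑ j ∈ S2, (if j < k then B k j else 0) = 0 := by
      refine Finset.sum_eq_zero fun k hk => Finset.sum_eq_zero fun j hj => ?_
      rw [hS1, Finset.mem_filter] at hk
      rw [hS2, Finset.mem_filter] at hj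
      rw [if_neg]
      rw [Fin.lt_def]
      omega
    have e21 : ∑ k ∈ S2, ∑ j ∈ S1, (if j < k then B k j else 0) = ∑ k ∈ S2, ∑ j ∈ S1, B k j := by
      refine Finset.sum_congr rfl fun k hk => Finset.sum_congr rfl fun j hj => ?_
      rw [hS2, Finset.mem_filter] at hk
      rw [hS1, Finset.mem_filter] at hj
      rw [if_pos]
      rw [Fin.lt_def]
      omega
    have hb := hB S2 S1 hd.symm
    have n1 : 0 ≤ κ * ∑ k ∈ S1, α k := mul_nonneg hκ (Finset.sum_nonneg fun k _ => hα k)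
    have n2 : 0 ≤ κ * ∑ k ∈ S2, γ k := mul_nonneg hκ (Finset.sum_nonneg fun k _ => hγ k)
    have : ∑ k ∈ S, ∑ j ∈ S, (if j < k then B k j else 0) =
        ∑ k ∈ S1, ∑ j ∈ S1, (if j < k then B k j else 0) +
        ∑ k ∈ S1, ∑ j ∈ S2, (if j < k then B k j else 0) +
        (∑ k ∈ S2, ∑ j ∈ S1, (if j < k then B k j else 0) +
        ∑ k ∈ S2, ∑ j ∈ S2, (if j < k then B k j else 0)) := by
      rw [hsplit, ← Finset.sum_add_distrib, ← Finset.sum_add_distrib]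
      simp only [hsplit]
    rw [this, e12, e21, hsplit]
    simp only [Finset.sum_add_distrib] at i1 i2 ⊢
    push_cast
    linarith

open Matrix in
lemma trunc_apply {K M N : ℕ} (A : Fin K → Matrix (Fin M) (Fin N) ℝ) (hL : 0 ≤ lamMaxBlock A)
    (u d : Fin K → Fin N → ℝ) (m : ℕ) (hm : K ≤ 2 ^ m) :
    ∑ k, ∑ j, (if j < k then (A k *ᵥ u k) ⬝ᵥ (A j *ᵥ d j) else 0) ≤
      m * (lamMaxBlock A / 4) * ∑ k, (sqnorm (u k) + sqnorm (d k)) := by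
  refine trunc (fun k j => (A k *ᵥ u k) ⬝ᵥ (A j *ᵥ d j)) (fun k => sqnorm (u k))
    (fun k => sqnorm (d k)) (lamMaxBlock A / 4) (by positivity) (fun k => sqnorm_nonneg' _)
    (fun k => sqnorm_nonneg' _) ?_ m 0 Finset.univ (fun k _ => ⟨by omega, by omega⟩)
  intro S T hST
  have h := lamB_bound A (fun k => if k ∈ S then u k else if k ∈ T then d k else 0)
  have e : ∀ {E : Type} [AddCommGroup E] (F : Fin K → (Fin N → ℝ) → E), (∀ k, F k 0 = 0) →
      ∑ k, F k (if k ∈ S then u k else if k ∈ T then d k else 0)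
      = ∑ k ∈ S, F k (u k) + ∑ k ∈ T, F k (d k) := by
    intro E _ F hF
    rw [← Finset.sum_filter_add_sum_filter_not Finset.univ (fun k => k ∈ S)]
    congr 1
    · rw [Finset.filter_mem_eq_inter, Finset.univ_inter]
      exact Finset.sum_congr rfl fun k hk => by rw [if_pos hk]
    · rw [← Finset.sum_subset (s₁ := T)]
      · refine Finset.sum_congr rfl fun k hk => ?_
        rw [if_neg (Finset.disjoint_right.mp hST hk), if_pos hk]
      · intro k hk
        simp [Finset.disjoint_right.mp hST hk]
      · intro k hk hk'
        rw [Finset.mem_filter] at hk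
        rw [if_neg hk.2, if_neg hk', hF]
  rw [e (fun k v => (A k) *ᵥ v) (by simp), e (fun k v => sqnorm v) (by simp [sqnorm])] at h
  simp only [← dotProduct_sum, ← sum_dotProduct]
  set p := ∑ k ∈ S, A k *ᵥ u k
  set q := ∑ k ∈ T, A k *ᵥ d k
  have h2 := sqnorm_nonneg' (p - q)
  rw [sqnorm_eq] at h h2
  simp only [add_dotProduct, dotProduct_add, sub_dotProduct, dotProduct_sub] at h h2
  rw [dotProduct_comm q p] at h h2
  linarith

lemma amgm {a p q : ℝ} (ha : 0 ≤ a) (hq : 0 ≤ q) (hp : 0 ≤ p)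
    (h : ∀ s > 0, a ≤ s * p + q / s) : a ^ 2 ≤ 4 * p * q := by
  rcases ha.eq_or_lt with rfl | ha
  · have := mul_nonneg hp hq
    nlinarith
  rcases hp.eq_or_lt with rfl | hp
  · have h1 := h ((2 * q + 1) / a) (by positivity)
    rw [mul_zero, zero_add, div_div_eq_mul_div, le_div_iff₀ (by positivity)] at h1
    nlinarith
  · have h1 := h (a / (2 * p)) (by positivity)
    have e : a / (2 * p) * p + q / (a / (2 * p)) = a / 2 + 2 * p * q / a := by field_simp
    rw [e] at h1
    have h2 : a / 2 ≤ 2 * p * q / a := by linarith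
    rw [le_div_iff₀ ha] at h2
    nlinarith

lemma recur (D : ℕ → ℝ) (c : ℝ) (hc : 0 ≤ c) (hD : ∀ r, 0 ≤ D r) (hmono : ∀ r, D (r+1) ≤ D r)
    (h : ∀ r, D r ^ 2 ≤ c * (D r - D (r+1))) (r : ℕ) : D r * r ≤ c := by
  induction r with
  | zero => simpa using hc
  | succ r ih =>
    have h1 := h r
    have h0 := hD r
    have h0' := hD (r+1)
    have hm := hmono r
    push_cast
    rcases (add_nonneg hc h0).eq_or_lt with h2 | h2
    · have : D r = 0 := by linarith
      have : D (r+1) = 0 := by linarith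
      rw [this]; linarith
    · have h3 : D (r+1) * (c + D r) ≤ c * D r := by nlinarith
      have h4 : (D (r+1) * (r+1)) * (c + D r) ≤ c * (c + D r) := by
        have : (0:ℝ) ≤ r + 1 := by positivity
        nlinarith
      exact le_of_mul_le_mul_right h4 h2

lemma symm_sum {K : ℕ} (B : Fin K → Fin K → ℝ) (hB : ∀ i j, B i j = B j i) :
    ∑ k, ∑ j, B k j = 2 * (∑ k, ∑ j, if j < k then B k j else 0) + ∑ k, B k k := by
  have h1 : ∑ k, ∑ j, (if k < j then B k j else 0) = ∑ k, ∑ j, if j < k then B k j else 0 := by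
    rw [Finset.sum_comm]
    refine Finset.sum_congr rfl fun k _ => Finset.sum_congr rfl fun j _ => ?_
    rw [hB]
  have h2 : ∑ k, B k k = ∑ k, ∑ j, if k = j then B k j else 0 := by simp
  rw [two_mul]
  nth_rw 1 [← h1]
  rw [h2, ← Finset.sum_add_distrib, ← Finset.sum_add_distrib]
  refine Finset.sum_congr rfl fun k _ => ?_
  rw [← Finset.sum_add_distrib, ← Finset.sum_add_distrib]
  refine Finset.sum_congr rfl fun j _ => ?_
  rcases lt_trichotomy j k with h | h | h
  · simp [h, h.not_gt, h.ne']
  · simp [h]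
  · simp [h, h.not_gt, h.ne]

open Matrix in
lemma star {K M N : ℕ} (A : Fin K → Matrix (Fin M) (Fin N) ℝ) (b : Fin M → ℝ)
    (hA : ∀ k, A k ≠ 0) (x y : Fin K → Fin N → ℝ)
    (hstep : ∀ k, y k = x k - (lamMaxQ (A k))⁻¹ • gradk A b (wpt x y k) k)
    (k : Fin K) (v : Fin N → ℝ) :
    resid A b x ⬝ᵥ (A k *ᵥ v) +
      ∑ j, (if j < k then (A k *ᵥ v) ⬝ᵥ (A j *ᵥ (y j - x j)) else 0) =
      - (lamMaxQ (A k) * ((y k - x k) ⬝ᵥ v)) := by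
  have hr : resid A b (wpt x y k) =
      resid A b x + ∑ j, if j < k then A j *ᵥ (y j - x j) else 0 := by
    unfold resid
    rw [sub_add_eq_add_sub, ← Finset.sum_add_distrib]
    congr 1
    refine Finset.sum_congr rfl fun j _ => ?_
    unfold wpt
    split_ifs
    · rw [mulVec_sub]; abel
    · simp
  have hg : gradk A b (wpt x y k) k = - (lamMaxQ (A k) • (y k - x k)) := by
    rw [hstep k, sub_sub_cancel_left, smul_neg, smul_smul,
      mul_inv_cancel₀ (lamQ_pos _ (hA k)).ne', one_smul, neg_neg]
  have h := congrArg (fun w => w ⬝ᵥ v) hg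
  simp only [gradk, hr, mulVec_transpose, ← dotProduct_mulVec, neg_dotProduct, smul_dotProduct,
    smul_eq_mul, add_dotProduct, sum_dotProduct] at h
  rw [← h]
  congr 1
  refine Finset.sum_congr rfl fun j _ => ?_
  split_ifs
  · rw [dotProduct_comm]
  · simp

open Matrix in
lemma descent {K M N : ℕ} (A : Fin K → Matrix (Fin M) (Fin N) ℝ) (b : Fin M → ℝ)
    (hA : ∀ k, A k ≠ 0) (x y : Fin K → Fin N → ℝ)
    (hstep : ∀ k, y k = x k - (lamMaxQ (A k))⁻¹ • gradk A b (wpt x y k) k) :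
    1 / 2 * ∑ k, lamMaxQ (A k) * sqnorm (y k - x k) ≤ gq A b x - gq A b y := by
  have hs := fun k => star A b hA x y hstep k (y k - x k)
  have hs' := Finset.sum_congr (rfl : (Finset.univ : Finset (Fin K)) = _) (fun k _ => hs k)
  rw [Finset.sum_add_distrib] at hs'
  have hr : resid A b y = resid A b x + ∑ k, A k *ᵥ (y k - x k) := by
    simp only [resid, mulVec_sub, Finset.sum_sub_distrib]
    abel
  have hsym := symm_sum (fun k j => (A k *ᵥ (y k - x k)) ⬝ᵥ (A j *ᵥ (y j - x j)))
    (fun i j => dotProduct_comm _ _)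
  have hle : ∑ k, (A k *ᵥ (y k - x k)) ⬝ᵥ (A k *ᵥ (y k - x k)) ≤
      ∑ k, lamMaxQ (A k) * sqnorm (y k - x k) := by
    refine Finset.sum_le_sum fun k _ => ?_
    rw [← sqnorm_eq]
    exact lamQ_bound _ _
  simp only [← sqnorm_eq, Finset.sum_neg_distrib] at hs'
  simp only [← dotProduct_sum, ← sum_dotProduct] at hsym
  rw [← dotProduct_sum] at hs'
  unfold gq
  rw [hr, sqnorm_eq, sqnorm_eq]
  simp only [add_dotProduct, dotProduct_add]
  rw [dotProduct_comm (∑ k, A k *ᵥ (y k - x k)) (resid A b x)]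
  linarith

open Matrix in
lemma gap {K M N : ℕ} (A : Fin K → Matrix (Fin M) (Fin N) ℝ) (b : Fin M → ℝ)
    (hA : ∀ k, A k ≠ 0) (x y z : Fin K → Fin N → ℝ)
    (hstep : ∀ k, y k = x k - (lamMaxQ (A k))⁻¹ • gradk A b (wpt x y k) k) :
    gq A b x - gq A b z ≤ - (∑ k, lamMaxQ (A k) * ((y k - x k) ⬝ᵥ (x k - z k))) -
      ∑ k, ∑ j, (if j < k then (A k *ᵥ (x k - z k)) ⬝ᵥ (A j *ᵥ (y j - x j)) else 0) := by
  have hs := fun k => star A b hA x y hstep k (x k - z k)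
  have hs' := Finset.sum_congr (rfl : (Finset.univ : Finset (Fin K)) = _) (fun k _ => hs k)
  rw [Finset.sum_add_distrib, Finset.sum_neg_distrib, ← dotProduct_sum] at hs'
  have hr : resid A b z = resid A b x - ∑ k, A k *ᵥ (x k - z k) := by
    simp only [resid, mulVec_sub, Finset.sum_sub_distrib]
    abel
  have h0 := sqnorm_nonneg' (∑ k, A k *ᵥ (x k - z k))
  unfold gq
  rw [hr]
  rw [sqnorm_eq] at h0 ⊢
  rw [sqnorm_eq]
  simp only [sub_dotProduct, dotProduct_sub]
  simp only [sub_dotProduct, dotProduct_sub] at hs' h0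
  rw [dotProduct_comm (∑ k, A k *ᵥ (x k - z k)) (resid A b x)]
  linarith

open Matrix in
lemma young {n : ℕ} (u v : Fin n → ℝ) (s : ℝ) (hs : 0 < s) :
    - (u ⬝ᵥ v) ≤ s / 2 * sqnorm u + sqnorm v / (2 * s) := by
  have h := sqnorm_nonneg' (s • u + v)
  rw [sqnorm_eq] at h
  simp only [add_dotProduct, dotProduct_add, smul_dotProduct, dotProduct_smul, smul_eq_mul,
    ← sqnorm_eq] at h
  rw [dotProduct_comm v u] at h
  have : s / 2 * sqnorm u + sqnorm v / (2 * s) + u ⬝ᵥ v =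
      (s * (s * sqnorm u) + s * (u ⬝ᵥ v) + (s * (u ⬝ᵥ v) + sqnorm v)) / (2 * s) := by
    field_simp; ring
  have h2 : 0 ≤ (s * (s * sqnorm u) + s * (u ⬝ᵥ v) + (s * (u ⬝ᵥ v) + sqnorm v)) / (2 * s) :=
    div_nonneg (by linarith) (by positivity)
  linarith

open Matrix in
lemma cross {K M N : ℕ} (A : Fin K → Matrix (Fin M) (Fin N) ℝ) (hL : 0 ≤ lamMaxBlock A)
    (e d : Fin K → Fin N → ℝ) (m : ℕ) (hm : K ≤ 2 ^ m) (t : ℝ) (ht : 0 < t) :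
    - ∑ k, ∑ j, (if j < k then (A k *ᵥ e k) ⬝ᵥ (A j *ᵥ d j) else 0) ≤
      m * (lamMaxBlock A / 4) * (∑ k, sqnorm (e k) / t + t * ∑ k, sqnorm (d k)) := by
  have h := trunc_apply A hL (fun k => (-1 : ℝ) • e k) (fun k => t • d k) m hm
  have e1 : ∑ k, ∑ j, (if j < k then (A k *ᵥ ((-1 : ℝ) • e k)) ⬝ᵥ (A j *ᵥ (t • d j)) else 0)
      = t * (- ∑ k, ∑ j, (if j < k then (A k *ᵥ e k) ⬝ᵥ (A j *ᵥ d j) else 0)) := by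
    rw [← Finset.sum_neg_distrib, Finset.mul_sum]
    refine Finset.sum_congr rfl fun k _ => ?_
    rw [← Finset.sum_neg_distrib, Finset.mul_sum]
    refine Finset.sum_congr rfl fun j _ => ?_
    split_ifs
    · simp [mulVec_smul, mulVec_neg]
    · simp
  rw [e1] at h
  simp only [sqnorm_smul', Finset.sum_add_distrib, ← Finset.mul_sum] at h
  rw [← Finset.sum_div]
  refine le_of_mul_le_mul_left (h.trans_eq ?_) ht
  field_simp

/-- Theorem 1, smooth unconstrained case: cyclic BCGD with
stepsizes `P_k = L_k` on `f(x) = (1/2)‖Σ_k A_k x_k − b‖²` satisfies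
`Δ^{(r+1)} ≤ 3 max{L, 2 log²(2NK)(L_max + L²/L_min)} R_0²/(r+1)`. -/
theorem bcgd_rate_smooth_unconstrained {K M N : ℕ} (hK : 1 ≤ K) (hM : 1 ≤ M) (hN : 1 ≤ N)
    (hNK : 3 ≤ N * K)
    (A : Fin K → Matrix (Fin M) (Fin N) ℝ) (hA : ∀ k, A k ≠ 0) (b : Fin M → ℝ)
    (x : ℕ → Fin K → Fin N → ℝ)
    (hstep : ∀ (r : ℕ) (k : Fin K),
      x (r + 1) k = x r k -
        (lamMaxQ (A k))⁻¹ • gradk A b (wpt (x r) (x (r + 1)) k) k)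
    (xstar : Fin K → Fin N → ℝ)
    (hxstar : ∀ y : Fin K → Fin N → ℝ, gq A b xstar ≤ gq A b y)
    (R0 : ℝ)
    (hR0 : ∀ z : Fin K → Fin N → ℝ, gq A b z ≤ gq A b (x 0) →
      ∀ y : Fin K → Fin N → ℝ, (∀ z' : Fin K → Fin N → ℝ, gq A b y ≤ gq A b z') →
        Real.sqrt (∑ k, sqnorm (z k - y k)) ≤ R0)
    (r : ℕ) :
    gq A b (x (r + 1)) - gq A b xstar ≤
      3 * max (lamMaxBlock A)
          (2 * Real.log (2 * (N : ℝ) * (K : ℝ)) ^ 2 *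
            (maxOf hK (fun k => lamMaxQ (A k)) +
              lamMaxBlock A ^ 2 / minOf hK (fun k => lamMaxQ (A k)))) *
        R0 ^ 2 / (r + 1) := by
  have hLpos : ∀ k, 0 < lamMaxQ (A k) := fun k => lamQ_pos _ (hA k)
  set L := lamMaxBlock A with hLdef
  have hL : 0 < L := lamB_pos A ⟨0, hK⟩ (hA _)
  set Lx := maxOf hK (fun k => lamMaxQ (A k)) with hLx
  set Ln := minOf hK (fun k => lamMaxQ (A k)) with hLn
  have hmax : ∀ k, lamMaxQ (A k) ≤ Lx := fun k =>
    Finset.le_sup' (fun k => lamMaxQ (A k)) (Finset.mem_univ k)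
  have hmin : ∀ k, Ln ≤ lamMaxQ (A k) := fun k =>
    Finset.inf'_le (fun k => lamMaxQ (A k)) (Finset.mem_univ k)
  have hLnpos : 0 < Ln := by
    rw [hLn, minOf, Finset.lt_inf'_iff]
    exact fun k _ => hLpos k
  have hLxpos : 0 < Lx := (hLpos ⟨0, hK⟩).trans_le (hmax _)
  -- the logarithm
  obtain ⟨m, hKm, hm1, hmc⟩ : ∃ m : ℕ, K ≤ 2 ^ m ∧ 1 ≤ m ∧
      (m : ℝ) * Real.log 2 ≤ Real.log (2 * (N : ℝ) * (K : ℝ)) := by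
    have h1 : 0 < Nat.clog 2 (N * K) := Nat.clog_pos (by norm_num) (by omega)
    refine ⟨Nat.clog 2 (N * K), ?_, h1, ?_⟩
    · have := Nat.le_pow_clog (b := 2) (by norm_num) (N * K)
      nlinarith
    · have h2 := Nat.pow_pred_clog_lt_self (b := 2) (by norm_num) (x := N * K) (by omega)
      have h3 : 2 ^ (Nat.clog 2 (N * K)) ≤ 2 * N * K := by
        have : 2 ^ (Nat.clog 2 (N * K)) = 2 * 2 ^ (Nat.clog 2 (N * K)).pred := by
          rw [← pow_succ']
          congr 1
          simp only [Nat.pred_eq_sub_one]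
          omega
        rw [this, mul_assoc]
        omega
      rw [← Real.log_pow]
      apply Real.log_le_log (by positivity)
      exact_mod_cast h3
  set c := Real.log (2 * (N : ℝ) * (K : ℝ)) with hc
  have hl2 := Real.log_two_gt_d9
  have hm0 : (1 : ℝ) ≤ m := by exact_mod_cast hm1
  have hmc' : (m : ℝ) ≤ 3 / 2 * c := by nlinarith
  have hc6 : 1 ≤ c := by
    have h6 : Real.exp 1 ≤ 2 * (N : ℝ) * (K : ℝ) := by
      have : (3 : ℝ) ≤ (N : ℝ) * K := by exact_mod_cast hNK
      have := Real.exp_one_lt_d9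
      nlinarith
    rw [hc, Real.le_log_iff_exp_le (lt_of_lt_of_le (Real.exp_pos 1) h6)]
    exact h6
  -- descent
  have hdesc := fun r => descent A b hA (x r) (x (r+1)) (hstep r)
  have hGnn : ∀ r, 0 ≤ ∑ k, lamMaxQ (A k) * sqnorm (x (r+1) k - x r k) := fun r =>
    Finset.sum_nonneg fun k _ => mul_nonneg (hLpos k).le (sqnorm_nonneg' _)
  have hmono : ∀ r, gq A b (x (r+1)) ≤ gq A b (x r) := fun r => by
    have := hdesc r
    have := hGnn r
    linarith
  have hle0 : ∀ r, gq A b (x r) ≤ gq A b (x 0) := by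
    intro r
    induction r with
    | zero => exact le_rfl
    | succ r ih => exact (hmono r).trans ih
  have hR : ∀ r, ∑ k, sqnorm (x r k - xstar k) ≤ R0 ^ 2 := by
    intro r
    have h1 := hR0 (x r) (hle0 r) xstar hxstar
    exact (Real.sqrt_le_left ((Real.sqrt_nonneg _).trans h1)).mp h1
  set C := Lx + m ^ 2 * L ^ 2 / (4 * Ln) with hC
  have hCpos : 0 < C := by positivity
  have hkey : ∀ r, (gq A b (x r) - gq A b xstar) ^ 2 ≤
      (4 * C * R0 ^ 2) * (gq A b (x r) - gq A b (x (r+1))) := by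
    intro r
    set G := ∑ k, lamMaxQ (A k) * sqnorm (x (r+1) k - x r k) with hG
    have hDG : ∑ k, sqnorm (x (r+1) k - x r k) ≤ G / Ln := by
      rw [le_div_iff₀ hLnpos, hG, Finset.sum_mul]
      refine Finset.sum_le_sum fun k _ => ?_
      rw [mul_comm]
      exact mul_le_mul_of_nonneg_right (hmin k) (sqnorm_nonneg' _)
    have hGn : 0 ≤ G := hGnn r
    have hall : ∀ s > 0, gq A b (x r) - gq A b xstar ≤ s * G + (C * R0 ^ 2 / 2) / s := by
      intro s hs
      have hg := gap A b hA (x r) (x (r+1)) xstar (hstep r)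
      have ht : 0 < s * Ln * 2 / (m * L) := by positivity
      have hcr := cross A hL.le (fun k => x r k - xstar k) (fun k => x (r+1) k - x r k) m hKm _ ht
      have hfirst : - (∑ k, lamMaxQ (A k) * ((x (r+1) k - x r k) ⬝ᵥ (x r k - xstar k))) ≤
          s / 2 * G + Lx * R0 ^ 2 / (2 * s) := by
        have : - (∑ k, lamMaxQ (A k) * ((x (r+1) k - x r k) ⬝ᵥ (x r k - xstar k))) ≤
            ∑ k, (s / 2 * (lamMaxQ (A k) * sqnorm (x (r+1) k - x r k)) +
              Lx / (2 * s) * sqnorm (x r k - xstar k)) := by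
          rw [← Finset.sum_neg_distrib]
          refine Finset.sum_le_sum fun k _ => ?_
          have hy := mul_le_mul_of_nonneg_left
            (young (x (r+1) k - x r k) (x r k - xstar k) s hs) (hLpos k).le
          have hz := mul_le_mul_of_nonneg_right (hmax k)
            (div_nonneg (sqnorm_nonneg' (x r k - xstar k)) (by positivity : 0 ≤ 2 * s))
          have e : Lx / (2 * s) * sqnorm (x r k - xstar k) =
            Lx * (sqnorm (x r k - xstar k) / (2 * s)) := by ring
          rw [e]
          linarith
        rw [Finset.sum_add_distrib, ← Finset.mul_sum, ← Finset.mul_sum] at this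
        have h2 := mul_le_mul_of_nonneg_left (hR r) (by positivity : 0 ≤ Lx / (2 * s))
        have e : Lx * R0 ^ 2 / (2 * s) = Lx / (2 * s) * R0 ^ 2 := by ring
        rw [e]
        linarith
      have hsecond : (m : ℝ) * (L / 4) * (∑ k, sqnorm (x r k - xstar k) / (s * Ln * 2 / (m * L)) +
          (s * Ln * 2 / (m * L)) * ∑ k, sqnorm (x (r+1) k - x r k)) ≤
          s / 2 * G + m ^ 2 * L ^ 2 / (4 * Ln) * R0 ^ 2 / (2 * s) := by
        have e : s / 2 * G + m ^ 2 * L ^ 2 / (4 * Ln) * R0 ^ 2 / (2 * s) =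
          (m : ℝ) * (L / 4) * (R0 ^ 2 / (s * Ln * 2 / (m * L)) +
            (s * Ln * 2 / (m * L)) * (G / Ln)) := by
          have : (m : ℝ) ≠ 0 := by positivity
          field_simp
          ring
        rw [e, ← Finset.sum_div]
        have := hR r
        gcongr
      have e : (C * R0 ^ 2 / 2) / s = Lx * R0 ^ 2 / (2 * s) +
          m ^ 2 * L ^ 2 / (4 * Ln) * R0 ^ 2 / (2 * s) := by
        rw [hC]; field_simp
      rw [e]
      simp only [← hLdef] at hcr
      linarith
    have ha := amgm (sub_nonneg.mpr (hxstar (x r))) (by positivity) hGn hall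
    have hd := hdesc r
    have h3 : 0 ≤ C * R0 ^ 2 := by positivity
    nlinarith
  have hfin := recur (fun r => gq A b (x r) - gq A b xstar) (4 * C * R0 ^ 2) (by positivity)
    (fun r => sub_nonneg.mpr (hxstar (x r))) (fun r => sub_le_sub_right (hmono r) _)
    (fun r => by
      have := hkey r
      simpa using this) (r + 1)
  simp only [Nat.cast_add, Nat.cast_one] at hfin
  have hr1 : (0 : ℝ) < (r : ℝ) + 1 := by positivity
  rw [le_div_iff₀ hr1]
  refine hfin.trans ?_
  refine mul_le_mul_of_nonneg_right ?_ (sq_nonneg _)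
  have h1 : 4 * C ≤ 3 * (2 * c ^ 2 * (Lx + L ^ 2 / Ln)) := by
    have hq : 0 ≤ L ^ 2 / Ln := by positivity
    have e : 4 * C = 4 * Lx + m ^ 2 * (L ^ 2 / Ln) := by
      rw [hC]; field_simp
    have hm2 : (m : ℝ) ^ 2 ≤ 6 * c ^ 2 := by nlinarith
    have hc2 : 4 ≤ 6 * c ^ 2 := by nlinarith
    have i1 := mul_le_mul_of_nonneg_right hm2 hq
    have i2 := mul_le_mul_of_nonneg_right hc2 hLxpos.le
    rw [e]
    linarith
  exact h1.trans (mul_le_mul_of_nonneg_left (le_max_right _ _) (by norm_num))
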